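/- arXiv:2212.02554 — 2 statements merged into one kernel-verified Lean document; each statement's English description precedes it below -/
import Mathlib

section
/- Let R be a commutative Noetherian ring and let i : M → I be an injective envelope of R-modules. Then for every injective R-module E, the induced morphism Hom_R(i,E) : Hom_R(I,E) → Hom_R(M,E) is a flat cover. -/
/-!
Write `F = Hom(I, E)`, let `f : F → Hom(M, E)` be restriction along `i`, and let `h : F → F`
satisfy `f ∘ h = f`, so that `h φ` and `φ` agree on the essential submodule `i M`.

For every ideal `J`, `h φ ∈ J F` implies `φ ∈ J F`, by Noetherian induction on `J`. Indeed
`J F` consists of the `φ` vanishing on the elements of `I` killed by `J`; if `x ≠ 0` is such an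
element, choose `r` with `0 ≠ r x ∈ i M`. Then `r ∉ J`, so by induction `φ = p + r β` with
`p ∈ J F`, and `0 = h φ x = h p x + h β (r x) = β (r x) = φ x`.

Hence `h` is injective with flat cokernel. As `E` is injective, maps into `F` extend along such
injections, so `h` has a left inverse. Every endomorphism over `f` thus has a left inverse, which
can be corrected to lie over `f` as well, and a monoid in which all elements are left invertible is
a group.
-/

universe u

variable (R : Type u) [CommRing R]

/-- A morphism `f : F → M` with `F` flat is a flat precover if every morphism from a
flat module to `M` factors through `f`. -/
def IsFlatPrecover {F M : Type u} [AddCommGroup F] [AddCommGroup M] [Module R F]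
    [Module R M] (f : F →ₗ[R] M) : Prop :=
  Module.Flat R F ∧
    ∀ (F' : Type u) [AddCommGroup F'] [Module R F'], Module.Flat R F' →
      ∀ g : F' →ₗ[R] M, ∃ h : F' →ₗ[R] F, f ∘ₗ h = g

/-- A flat precover `f : F → M` is a flat cover if every `h : F → F` with `f ∘ h = f`
is an automorphism. -/
def IsFlatCover {F M : Type u} [AddCommGroup F] [AddCommGroup M] [Module R F]
    [Module R M] (f : F →ₗ[R] M) : Prop :=
  IsFlatPrecover R f ∧ ∀ h : F →ₗ[R] F, f ∘ₗ h = f → Function.Bijective h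

/-- A morphism `i : M → E` is an injective envelope if `E` is injective, `i` is
injective, and the image of `i` is an essential submodule of `E`. -/
def IsInjectiveEnvelope {M E : Type u} [AddCommGroup M] [AddCommGroup E] [Module R M]
    [Module R E] (i : M →ₗ[R] E) : Prop :=
  Module.Injective R E ∧ Function.Injective i ∧
    ∀ N : Submodule R E, N ≠ ⊥ → N ⊓ LinearMap.range i ≠ ⊥

/-- An injective cogenerator is an injective module `E` such that `Hom(N, E) ≠ 0`
for every nonzero module `N`. -/
def IsInjectiveCogenerator (E : Type u) [AddCommGroup E] [Module R E] : Prop :=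
  Module.Injective R E ∧
    ∀ (N : Type u) [AddCommGroup N] [Module R N], (∃ x : N, x ≠ 0) →
      ∃ g : N →ₗ[R] E, g ≠ 0

section

universe v w

variable {R}

section Lifting

variable {A B I : Type*} {E : Type v} [AddCommGroup A] [AddCommGroup B] [AddCommGroup I]
  [AddCommGroup E] [Module R A] [Module R B] [Module R I] [Module R E] [Small.{v} R]
  [Module.Injective R E]

theorem exists_comp_eq_of_ker_le_ker (α : A →ₗ[R] B) (f : A →ₗ[R] E)
    (h : LinearMap.ker α ≤ LinearMap.ker f) : ∃ β : B →ₗ[R] E, β ∘ₗ α = f := by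
  obtain ⟨β, hβ⟩ := Module.Injective.extension_property R E _ _ ((LinearMap.ker α).liftQ α le_rfl)
    (LinearMap.ker_eq_bot.1 (Submodule.ker_liftQ_eq_bot' _ α rfl)) ((LinearMap.ker α).liftQ f h)
  refine ⟨β, ?_⟩
  rw [← (LinearMap.ker α).liftQ_mkQ α le_rfl, ← LinearMap.comp_assoc, hβ, Submodule.liftQ_mkQ]

theorem exists_sum_comp_eq_of_iInf_ker_le_ker {ι : Type*} [Fintype ι] (α : ι → A →ₗ[R] B)
    (f : A →ₗ[R] E) (h : ⨅ j, LinearMap.ker (α j) ≤ LinearMap.ker f) :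
    ∃ β : ι → B →ₗ[R] E, ∑ j, β j ∘ₗ α j = f := by
  classical
  obtain ⟨β, rfl⟩ := exists_comp_eq_of_ker_le_ker (LinearMap.pi α) f (by rwa [LinearMap.ker_pi])
  refine ⟨fun j ↦ β ∘ₗ LinearMap.single R (fun _ ↦ B) j, LinearMap.ext fun x ↦ ?_⟩
  simp only [LinearMap.sum_apply, LinearMap.comp_apply, LinearMap.single_apply, ← map_sum,
    Finset.univ_sum_single]
  rfl

theorem exists_comp_eq_of_flat_quotient_range {u : A →ₗ[R] B} (hu : Function.Injective u)
    [Module.Flat R (B ⧸ LinearMap.range u)] (g : A →ₗ[R] I →ₗ[R] E) :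
    ∃ k : B →ₗ[R] I →ₗ[R] E, k ∘ₗ u = g := by
  have hIu : Function.Injective (u.lTensor I) :=
    LinearMap.lTensor_injective_of_exact_of_flat _ (Submodule.mkQ_surjective _) u hu
      (LinearMap.exact_map_mkQ_range u) I
  obtain ⟨k, hk⟩ := Module.Injective.extension_property R E _ _ _ hIu (TensorProduct.lift g.flip)
  refine ⟨(TensorProduct.curry k).flip, ?_⟩
  ext a x
  simpa using LinearMap.congr_fun hk (x ⊗ₜ[R] a)

end Lifting

section Flatness

theorem exists_forall_eq_smul_of_forall_syzygy {I : Type w} [AddCommGroup I] [Module R I]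
    [Small.{w} R] [Module.Injective R I] {ι : Type*} [Fintype ι] (f : ι → R) (y : ι → I)
    (h : ∀ v : ι → R, ∑ i, v i * f i = 0 → ∑ i, v i • y i = 0) :
    ∃ z : I, ∀ i, y i = f i • z := by
  classical
  obtain ⟨γ, hγ⟩ := exists_comp_eq_of_ker_le_ker (Fintype.linearCombination R f)
    (Fintype.linearCombination R y) h
  refine ⟨γ 1, fun i ↦ ?_⟩
  simpa [← map_smul] using (LinearMap.congr_fun hγ (Pi.single i 1)).symm

theorem flat_linearMap_of_injective [IsNoetherianRing R] (I : Type w) (E : Type v)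
    [AddCommGroup I] [AddCommGroup E] [Module R I] [Module R E] [Small.{w} R] [Small.{v} R]
    [Module.Injective R I] [Module.Injective R E] : Module.Flat R (I →ₗ[R] E) := by
  refine Module.Flat.of_forall_isTrivialRelation fun {l f φ} hφ ↦ ?_
  obtain ⟨m, s, hs⟩ := Submodule.fg_iff_exists_fin_generating_family.1
    (IsNoetherian.noetherian (LinearMap.ker (Fintype.linearCombination R f)))
  let α (j : Fin m) : (Fin l → I) →ₗ[R] I := LinearMap.lsum R _ R fun i ↦ s j i • LinearMap.id
  have hker : ⨅ j, LinearMap.ker (α j) ≤ LinearMap.ker (LinearMap.lsum R _ R φ) := by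
    intro y hy
    have hsy (j : Fin m) : ∑ i, s j i • y i = 0 := by
      simpa [α] using (Submodule.mem_iInf _).1 hy j
    have hspan : LinearMap.ker (Fintype.linearCombination R f) ≤
        LinearMap.ker (Fintype.linearCombination R y) := by
      rw [← hs, Submodule.span_le]
      rintro _ ⟨j, rfl⟩
      exact hsy j
    obtain ⟨z, hz⟩ := exists_forall_eq_smul_of_forall_syzygy f y hspan
    simpa [hz] using LinearMap.congr_fun hφ z
  obtain ⟨β, hβ⟩ := exists_sum_comp_eq_of_iInf_ker_le_ker α _ hker
  refine ⟨m, fun i j ↦ s j i, β, fun i ↦ LinearMap.ext fun z ↦ ?_, fun j ↦ ?_⟩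
  · have hβz := LinearMap.congr_fun hβ (Pi.single i z)
    simpa only [α, LinearMap.sum_apply, LinearMap.comp_apply, LinearMap.lsum_piSingle,
      LinearMap.smul_apply, LinearMap.id_apply, map_smul] using hβz.symm
  · have hsj : s j ∈ LinearMap.ker (Fintype.linearCombination R f) :=
      hs ▸ Submodule.subset_span ⟨j, rfl⟩
    simpa [Fintype.linearCombination_apply, mul_comm] using hsj

theorem mem_span_range_smul_top_iff {ι A : Type*} [Fintype ι] [AddCommGroup A] [Module R A]
    {f : ι → R} {a : A} :
    a ∈ Ideal.span (Set.range f) • (⊤ : Submodule R A) ↔ ∃ c : ι → A, ∑ i, f i • c i = a := by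
  classical
  have hrange := Submodule.range_lsum_smul (LinearMap.id (R := R) (M := A)) f
  rw [LinearMap.range_id] at hrange
  rw [Ideal.span, Submodule.span_smul_eq, ← hrange, LinearMap.mem_range,
    ← (Finsupp.linearEquivFunOnFinite R A ι).exists_congr_right]
  simp [Finsupp.sum_fintype]

theorem flat_quotient_range_of_forall_mem_smul_top {A B : Type*} [AddCommGroup A]
    [AddCommGroup B] [Module R A] [Module R B] [Module.Flat R B] {u : A →ₗ[R] B}
    (hu : ∀ J : Ideal R, J.FG → ∀ a, u a ∈ J • (⊤ : Submodule R B) →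
      a ∈ J • (⊤ : Submodule R A)) :
    Module.Flat R (B ⧸ LinearMap.range u) := by
  refine Module.Flat.of_forall_isTrivialRelation fun {l f c} hc ↦ ?_
  choose b hb using fun i ↦ (LinearMap.range u).mkQ_surjective (c i)
  obtain ⟨a, ha⟩ : ∑ i, f i • b i ∈ LinearMap.range u := by
    rw [← Submodule.ker_mkQ (LinearMap.range u), LinearMap.mem_ker]
    simpa [hb] using hc
  obtain ⟨a', ha'⟩ := mem_span_range_smul_top_iff.1 <|
    hu (Ideal.span (Set.range f)) (Submodule.fg_span (Set.finite_range f)) a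
      (ha ▸ mem_span_range_smul_top_iff.2 ⟨b, rfl⟩)
  have hrel : ∑ i, f i • (b i - u (a' i)) = 0 := by
    simp [smul_sub, ← ha, ← ha']
  obtain ⟨k, t, y, hy, ht⟩ := Module.Flat.isTrivialRelation_of_sum_smul_eq_zero hrel
  refine ⟨k, t, fun j ↦ (LinearMap.range u).mkQ (y j), fun i ↦ ?_, ht⟩
  calc
    c i = (LinearMap.range u).mkQ (b i - u (a' i)) := by
      rw [map_sub, hb, ← LinearMap.comp_apply, LinearMap.range_mkQ_comp, LinearMap.zero_apply,
        sub_zero]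
    _ = ∑ j, t i j • (LinearMap.range u).mkQ (y j) := by simp only [hy, map_sum, map_smul]

end Flatness

section Essential

variable {I : Type w} {E : Type v} [AddCommGroup I] [AddCommGroup E] [Module R I] [Module R E]

/-- A submodule is essential if it meets every nonzero submodule nontrivially, which is the
condition that `IsInjectiveEnvelope` imposes on the image. -/
def IsEssential (N : Submodule R I) : Prop :=
  ∀ L : Submodule R I, L ≠ ⊥ → L ⊓ N ≠ ⊥

theorem IsEssential.exists_smul_mem_ne_zero {N : Submodule R I} (hN : IsEssential N) {x : I}
    (hx : x ≠ 0) : ∃ r : R, r • x ∈ N ∧ r • x ≠ 0 := by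
  obtain ⟨y, ⟨hyx, hyN⟩, hy⟩ := Submodule.exists_mem_ne_zero_of_ne_bot
    (hN (R ∙ x) (by simpa using hx))
  obtain ⟨r, rfl⟩ := Submodule.mem_span_singleton.1 hyx
  exact ⟨r, hyN, hy⟩

theorem torsionBySet_le_ker_of_mem_smul_top {J : Ideal R} {φ : I →ₗ[R] E}
    (hφ : φ ∈ J • (⊤ : Submodule R (I →ₗ[R] E))) :
    Submodule.torsionBySet R I J ≤ LinearMap.ker φ := by
  intro x hx
  induction hφ using Submodule.smul_induction_on' with
  | smul r hr ψ _ => simp [← map_smul, (Submodule.mem_torsionBySet_iff _ _).1 hx ⟨r, hr⟩]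
  | add ψ _ χ _ hψ hχ => simp [LinearMap.mem_ker.1 hψ, LinearMap.mem_ker.1 hχ]

variable [Small.{v} R] [Module.Injective R E]

theorem mem_smul_top_iff_torsionBySet_le_ker {J : Ideal R} (hJ : J.FG) {φ : I →ₗ[R] E} :
    φ ∈ J • (⊤ : Submodule R (I →ₗ[R] E)) ↔
      Submodule.torsionBySet R I J ≤ LinearMap.ker φ := by
  refine ⟨torsionBySet_le_ker_of_mem_smul_top, fun hφ ↦ ?_⟩
  obtain ⟨m, s, rfl⟩ := Submodule.fg_iff_exists_fin_generating_family.1 hJ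
  have hker : ⨅ j, LinearMap.ker (s j • (LinearMap.id : I →ₗ[R] I)) ≤ LinearMap.ker φ := by
    refine fun x hx ↦ hφ ?_
    rw [← Ideal.span, ← Submodule.torsionBySet_eq_torsionBySet_span, Submodule.mem_torsionBySet_iff]
    rintro ⟨_, j, rfl⟩
    simpa using (Submodule.mem_iInf _).1 hx j
  obtain ⟨β, hβ⟩ := exists_sum_comp_eq_of_iInf_ker_le_ker _ φ hker
  exact mem_span_range_smul_top_iff.2 ⟨β, by simpa [LinearMap.comp_smul] using hβ⟩

variable [IsNoetherianRing R]

theorem mem_smul_top_of_map_mem_smul_top {N : Submodule R I}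
    (hN : IsEssential N) {h : (I →ₗ[R] E) →ₗ[R] I →ₗ[R] E}
    (hh : ∀ φ, Set.EqOn (h φ) φ N) (J : Ideal R) (φ : I →ₗ[R] E)
    (hφ : h φ ∈ J • (⊤ : Submodule R (I →ₗ[R] E))) :
    φ ∈ J • (⊤ : Submodule R (I →ₗ[R] E)) := by
  induction J using IsNoetherian.induction with | hgt J ih =>
  rw [mem_smul_top_iff_torsionBySet_le_ker (IsNoetherian.noetherian J)]
  intro x hx
  obtain rfl | hx0 := eq_or_ne x 0
  · exact zero_mem _
  obtain ⟨r, hrN, hr0⟩ := hN.exists_smul_mem_ne_zero hx0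
  have hrJ : r ∉ J := fun hrJ ↦ hr0 ((Submodule.mem_torsionBySet_iff _ _).1 hx ⟨r, hrJ⟩)
  have hsup : φ ∈ (J ⊔ Ideal.span {r}) • (⊤ : Submodule R (I →ₗ[R] E)) :=
    ih _ (left_lt_sup.2 (by simpa using hrJ)) (Submodule.smul_mono_left le_sup_left hφ)
  rw [Submodule.sup_smul, Submodule.ideal_span_singleton_smul] at hsup
  obtain ⟨p, hp, _, hβ, rfl⟩ := Submodule.mem_sup.1 hsup
  obtain ⟨β, -, rfl⟩ := (Submodule.mem_smul_pointwise_iff_exists _ _ _).1 hβ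
  have hpx : p x = 0 := torsionBySet_le_ker_of_mem_smul_top hp hx
  have hhpx : h p x = 0 := torsionBySet_le_ker_of_mem_smul_top
    (Submodule.smul_top_le_comap_smul_top J h hp) hx
  rw [LinearMap.mem_ker]
  calc
    (p + r • β) x = β (r • x) := by simp [hpx]
    _ = h β (r • x) := (hh β hrN).symm
    _ = h (p + r • β) x := by simp [hhpx]
    _ = 0 := torsionBySet_le_ker_of_mem_smul_top hφ hx

theorem exists_comp_eq_id_of_eqOn_essential [Small.{w} R] [Module.Injective R I]
    {N : Submodule R I} (hN : IsEssential N) {h : (I →ₗ[R] E) →ₗ[R] I →ₗ[R] E}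
    (hh : ∀ φ, Set.EqOn (h φ) φ N) :
    ∃ k : (I →ₗ[R] E) →ₗ[R] I →ₗ[R] E, k ∘ₗ h = LinearMap.id := by
  have hflat := flat_linearMap_of_injective (R := R) I E
  have hpure := mem_smul_top_of_map_mem_smul_top (E := E) hN hh
  have hcoker := flat_quotient_range_of_forall_mem_smul_top fun J _ ↦ hpure J
  have hinj : Function.Injective h := (injective_iff_map_eq_zero h).2 fun φ hφ ↦ by
    simpa using hpure ⊥ φ (by simp [hφ])
  exact exists_comp_eq_of_flat_quotient_range hinj LinearMap.id

end Essential

section Cover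

theorem bijective_of_forall_exists_comp_eq_id {F M : Type*} [AddCommGroup F] [AddCommGroup M]
    [Module R F] [Module R M] {f : F →ₗ[R] M}
    (hf : ∀ h : F →ₗ[R] F, f ∘ₗ h = f → ∃ k : F →ₗ[R] F, k ∘ₗ h = LinearMap.id)
    {h : F →ₗ[R] F} (hh : f ∘ₗ h = f) : Function.Bijective h := by
  have hleft {h : F →ₗ[R] F} (hh : f ∘ₗ h = f) :
      ∃ k : F →ₗ[R] F, f ∘ₗ k = f ∧ k ∘ₗ h = LinearMap.id := by
    obtain ⟨k, hk⟩ := hf h hh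
    refine ⟨k + LinearMap.id - h ∘ₗ k, ?_, ?_⟩
    · rw [LinearMap.comp_sub, LinearMap.comp_add, ← LinearMap.comp_assoc, hh, LinearMap.comp_id,
        add_sub_cancel_left]
    · rw [LinearMap.sub_comp, LinearMap.add_comp, LinearMap.comp_assoc, hk, LinearMap.id_comp,
        LinearMap.comp_id, add_sub_cancel_right]
  obtain ⟨k, hfk, hkh⟩ := hleft hh
  obtain ⟨l, -, hlk⟩ := hleft hfk
  obtain rfl : l = h := left_inv_eq_right_inv (M := Module.End R F) hlk hkh
  exact Function.bijective_iff_has_inverse.2 ⟨k, LinearMap.congr_fun hkh, LinearMap.congr_fun hlk⟩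

theorem isFlatPrecover_lcomp {M I E : Type u} [AddCommGroup M] [AddCommGroup I] [AddCommGroup E]
    [Module R M] [Module R I] [Module R E] [Module.Injective R E] [Module.Flat R (I →ₗ[R] E)]
    {i : M →ₗ[R] I} (hi : Function.Injective i) : IsFlatPrecover R (LinearMap.lcomp R E i) := by
  refine ⟨inferInstance, fun F' _ _ _ g ↦ ?_⟩
  obtain ⟨k, hk⟩ := Module.Injective.extension_property R E _ _ (i.lTensor F')
    (Module.Flat.lTensor_preserves_injective_linearMap i hi) (TensorProduct.lift g)
  refine ⟨TensorProduct.curry k, ?_⟩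
  ext y m
  simpa using LinearMap.congr_fun hk (y ⊗ₜ[R] m)

end Cover

end

/-- Over a commutative Noetherian ring, if `i : M → I` is an injective
envelope then `Hom_R(i, E)` is a flat cover for every injective module `E`. -/
theorem dual_of_injectiveEnvelope_isFlatCover [IsNoetherianRing R]
    {M I : Type u} [AddCommGroup M] [AddCommGroup I] [Module R M] [Module R I]
    (i : M →ₗ[R] I) (hi : IsInjectiveEnvelope R i)
    (E : Type u) [AddCommGroup E] [Module R E] (hE : Module.Injective R E) :
    IsFlatCover R (LinearMap.lcomp R E i) := by
  obtain ⟨hI, hinj, hess⟩ := hi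
  have hflat := flat_linearMap_of_injective (R := R) I E
  refine ⟨isFlatPrecover_lcomp hinj, fun _ ↦
    bijective_of_forall_exists_comp_eq_id fun h hh ↦ ?_⟩
  refine exists_comp_eq_id_of_eqOn_essential hess fun φ ↦ ?_
  rintro _ ⟨m, rfl⟩
  exact LinearMap.congr_fun (LinearMap.congr_fun hh φ) m
end

section
/- Let R be a commutative Noetherian ring, p ∈ Spec R, E an injective R-module, and M an R-module. Then there exists an isomorphism, natural in M: k(p) ⊗_{R_p} Hom_R(R_p, Hom_R(M,E)) ≅ Hom_R(Hom_{R_p}(k(p), M_p), E). -/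
universe u

variable (R : Type u) [CommRing R]

open CategoryTheory TensorProduct

/-- A module `C` is cotorsion if `Ext¹(F, C) = 0` for every flat module `F`. -/
def IsCotorsion (C : Type u) [AddCommGroup C] [Module R C] : Prop :=
  ∀ (F : Type u) [AddCommGroup F] [Module R F], Module.Flat R F →
    Subsingleton (((Ext R (ModuleCat.{u} R) 1).obj
      (Opposite.op (ModuleCat.of R F))).obj (ModuleCat.of R C))

/-- The `A`-module structure on `Hom_R(X, M)` for an `R`-algebra `A` and an `A`-module
`X`, given by `(a • f) x = f (a • x)`. -/
noncomputable instance (priority := 50) LinearMap.domSMulModule (A : Type u) [CommRing A] [Algebra R A]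
    (X : Type u) [AddCommGroup X] [Module R X] [Module A X] [IsScalarTower R A X]
    (M : Type u) [AddCommGroup M] [Module R M] : Module A (X →ₗ[R] M) where
  smul a f := f ∘ₗ (a • (LinearMap.id : X →ₗ[R] X))
  one_smul f := LinearMap.ext fun x => by
    show f ((1 : A) • x) = f x
    rw [one_smul]
  mul_smul a b f := LinearMap.ext fun x => by
    show f ((a * b) • x) = f (b • a • x)
    rw [mul_comm, mul_smul]
  smul_zero a := rfl
  smul_add a f g := rfl
  add_smul a b f := LinearMap.ext fun x => by
    show f ((a + b) • x) = f (a • x) + f (b • x)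
    rw [add_smul, map_add]
  zero_smul f := LinearMap.ext fun x => by
    show f ((0 : A) • x) = 0
    rw [zero_smul, map_zero]

/-- Postcomposition `Hom_R(A, F) → Hom_R(A, M)` with `f : F → M`, as an `A`-linear map. -/
noncomputable def LinearMap.domHomPostcomp (A : Type u) [CommRing A] [Algebra R A]
    {F M : Type u} [AddCommGroup F] [AddCommGroup M] [Module R F] [Module R M]
    (f : F →ₗ[R] M) : (A →ₗ[R] F) →ₗ[A] (A →ₗ[R] M) where
  toFun g := f ∘ₗ g
  map_add' g h := LinearMap.ext fun x => by simp
  map_smul' a g := LinearMap.ext fun x => rfl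

/-!
For an `R`-algebra `A`, an `A`-module `X` and an injective `R`-module `E`, evaluation is a natural
map `K ⊗[A] Hom_R(X, E) → Hom_R(Hom_A(K, X), E)`. It is an isomorphism for `K` finite free, and
both sides are right exact in `K` because `E` is injective, so by the five lemma it is an
isomorphism for every finitely presented `K`. If `X` is the base change of an `R`-module `M` to
`A`, the tensor-hom adjunction rewrites `Hom_R(X, E)` as `Hom_R(A, Hom_R(M, E))`. Over a Noetherian
ring `R` the residue field `k(𝔭)` is finitely presented over `R_𝔭`, and `M_𝔭` is the base change
of `M` to `R_𝔭`.
-/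

section InjectiveModule

universe v

variable {R} {M₁ M₂ M₃ : Type*} [AddCommGroup M₁] [AddCommGroup M₂] [AddCommGroup M₃]
  [Module R M₁] [Module R M₂] [Module R M₃]
  (E : Type v) [AddCommGroup E] [Module R E] [Small.{v} R] [Module.Injective R E]

theorem lcomp_surjective_of_injective {f : M₁ →ₗ[R] M₂} (hf : Function.Injective f) :
    Function.Surjective (LinearMap.lcomp R E f) :=
  Module.Injective.extension_property R E M₁ M₂ f hf

theorem exact_lcomp_of_exact {f : M₁ →ₗ[R] M₂} {g : M₂ →ₗ[R] M₃} (hfg : Function.Exact f g) :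
    Function.Exact (LinearMap.lcomp R E g) (LinearMap.lcomp R E f) := by
  intro h
  refine ⟨fun hh ↦ ?_, ?_⟩
  · obtain ⟨k, hk⟩ := lcomp_surjective_of_injective E (LinearMap.injective_range_liftQ_of_exact hfg)
      ((LinearMap.range f).liftQ h (LinearMap.range_le_ker_iff.mpr hh))
    exact ⟨k, LinearMap.ext fun x ↦ LinearMap.congr_fun hk (Submodule.Quotient.mk x)⟩
  · rintro ⟨k, rfl⟩
    ext x
    simp [hfg.apply_apply_eq_zero]

end InjectiveModule

section DomSMul

variable {R} {A : Type u} [CommRing A] [Algebra R A]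
  {X : Type u} [AddCommGroup X] [Module R X] [Module A X] [IsScalarTower R A X]
  {E : Type u} [AddCommGroup E] [Module R E]

theorem domSMul_apply (a : A) (f : X →ₗ[R] E) (x : X) : (a • f) x = f (a • x) := rfl

instance isScalarTower_domSMul : IsScalarTower R A (X →ₗ[R] E) where
  smul_assoc r a f := LinearMap.ext fun x ↦ by simp [domSMul_apply]

end DomSMul

section TensorHomEval

variable (A : Type u) [CommRing A] [Algebra R A]
  (K : Type u) [AddCommGroup K] [Module A K]
  (X : Type u) [AddCommGroup X] [Module R X] [Module A X] [IsScalarTower R A X]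
  (E : Type u) [AddCommGroup E] [Module R E]

/-- The evaluation map `K ⊗[A] Hom_R(X, E) → Hom_R(Hom_A(K, X), E)`, which sends `c ⊗ w` to
`h ↦ w (h c)`. -/
noncomputable def tensorHomEval : K ⊗[A] (X →ₗ[R] E) →ₗ[A] ((K →ₗ[A] X) →ₗ[R] E) :=
  TensorProduct.lift <| LinearMap.mk₂ A
    (fun c w ↦ w ∘ₗ (LinearMap.applyₗ c).restrictScalars R)
    (fun c c' w ↦ by ext h; simp)
    (fun a c w ↦ by ext h; simp [domSMul_apply])
    (fun c w w' ↦ by ext h; simp)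
    (fun a c w ↦ by ext h; simp [domSMul_apply])

@[simp]
theorem tensorHomEval_tmul (c : K) (w : X →ₗ[R] E) (h : K →ₗ[A] X) :
    tensorHomEval R A K X E (c ⊗ₜ w) h = w (h c) := rfl

theorem tensorHomEval_rTensor {L L' : Type u} [AddCommGroup L] [Module A L]
    [AddCommGroup L'] [Module A L'] (f : L →ₗ[A] L') (x : L ⊗[A] (X →ₗ[R] E)) :
    tensorHomEval R A L' X E (f.rTensor (X →ₗ[R] E) x) =
      LinearMap.lcomp R E ((LinearMap.lcomp A X f).restrictScalars R)
        (tensorHomEval R A L X E x) := by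
  induction x with
  | zero => simp
  | add x y hx hy => simp only [map_add, hx, hy]
  | tmul c w => ext h; simp

theorem tensorHomEval_bijective_of_free [Module.Free A K] [Module.Finite A K] :
    Function.Bijective (tensorHomEval R A K X E) := by
  let b := Module.Free.chooseBasis A K
  let inv (φ : (K →ₗ[A] X) →ₗ[R] E) : K ⊗[A] (X →ₗ[R] E) :=
    ∑ i, b i ⊗ₜ (φ ∘ₗ (LinearMap.smulRightₗ (b.coord i)).restrictScalars R)
  refine Function.bijective_iff_has_inverse.mpr ⟨inv, fun x ↦ ?_, fun φ ↦ ?_⟩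
  · induction x with
    | zero => simp [inv]
    | add x y hx hy =>
      simp only [inv, map_add, LinearMap.add_comp, TensorProduct.tmul_add,
        Finset.sum_add_distrib] at hx hy ⊢
      rw [hx, hy]
    | tmul c w =>
      have eval_coord (i) : tensorHomEval R A K X E (c ⊗ₜ w) ∘ₗ
          (LinearMap.smulRightₗ (b.coord i)).restrictScalars R = b.repr c i • w := by
        ext x
        simp [domSMul_apply]
      simp only [inv, eval_coord, ← TensorProduct.smul_tmul, ← TensorProduct.sum_tmul, b.sum_repr]
  · ext h
    have expand : ∑ i, LinearMap.smulRightₗ (b.coord i) (h (b i)) = h :=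
      b.ext fun j ↦ by simp [Finsupp.single_apply]
    simp only [inv, map_sum, LinearMap.sum_apply, tensorHomEval_tmul, LinearMap.comp_apply,
      LinearMap.restrictScalars_apply]
    rw [← map_sum, expand]

theorem tensorHomEval_bijective [Module.FinitePresentation A K] [Module.Injective R E] :
    Function.Bijective (tensorHomEval R A K X E) := by
  obtain ⟨n, m, g, f, hg, hfg⟩ := Module.FinitePresentation.exists_fin' A K
  let dual {L L' : Type u} [AddCommGroup L] [Module A L] [AddCommGroup L'] [Module A L']
      (φ : L →ₗ[A] L') : ((L →ₗ[A] X) →ₗ[R] E) →ₗ[R] ((L' →ₗ[A] X) →ₗ[R] E) :=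
    LinearMap.lcomp R E ((LinearMap.lcomp A X φ).restrictScalars R)
  exact AddMonoidHom.bijective_of_surjective_of_bijective_of_right_exact
    (f.rTensor (X →ₗ[R] E)).toAddMonoidHom (g.rTensor (X →ₗ[R] E)).toAddMonoidHom
    (dual f).toAddMonoidHom (dual g).toAddMonoidHom
    (tensorHomEval R A (Fin m → A) X E).toAddMonoidHom
    (tensorHomEval R A (Fin n → A) X E).toAddMonoidHom
    (tensorHomEval R A K X E).toAddMonoidHom
    (AddMonoidHom.ext fun x ↦ (tensorHomEval_rTensor R A X E f x).symm)
    (AddMonoidHom.ext fun x ↦ (tensorHomEval_rTensor R A X E g x).symm)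
    (rTensor_exact _ hfg hg)
    (exact_lcomp_of_exact E (LinearMap.exact_lcomp_of_exact_of_surjective X hfg hg))
    (tensorHomEval_bijective_of_free R A _ X E).surjective
    (tensorHomEval_bijective_of_free R A _ X E)
    (LinearMap.rTensor_surjective _ hg)
    (lcomp_surjective_of_injective E (LinearMap.lcomp_injective_of_surjective g hg))

end TensorHomEval

section BaseChange

variable {R} {A : Type u} [CommRing A] [Algebra R A]
  {M X : Type u} [AddCommGroup M] [Module R M]
  [AddCommGroup X] [Module R X] [Module A X] [IsScalarTower R A X]
  {β : M →ₗ[R] X} (hβ : IsBaseChange A β)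
  {N Y : Type u} [AddCommGroup N] [Module R N]
  [AddCommGroup Y] [Module R Y] [Module A Y] [IsScalarTower R A Y]
  {γ : N →ₗ[R] Y} (hγ : IsBaseChange A γ)
  (K : Type u) [AddCommGroup K] [Module A K]
  (E : Type u) [AddCommGroup E] [Module R E]

/-- The tensor-hom adjunction `Hom_R(X, E) ≃ Hom_R(A, Hom_R(M, E))` for a base change `X` of `M`
along `R → A`, as an `A`-linear equivalence. It sends `g` to `a ↦ m ↦ g (a • β m)`. -/
noncomputable def baseChangeHomEquiv : (X →ₗ[R] E) ≃ₗ[A] (A →ₗ[R] M →ₗ[R] E) :=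
  { (hβ.equiv.restrictScalars R).symm.congrLeft E R ≪≫ₗ
      (TensorProduct.lift.equiv (.id R) A M E).symm with
    map_smul' := fun a g ↦ by
      ext b m
      simp [domSMul_apply, IsBaseChange.equiv_tmul, mul_smul] }

@[simp]
theorem baseChangeHomEquiv_apply (g : X →ₗ[R] E) (a : A) (m : M) :
    baseChangeHomEquiv hβ E g a m = g (a • β m) := by
  simp [baseChangeHomEquiv, IsBaseChange.equiv_tmul]

theorem baseChangeHomEquiv_comp {f : M →ₗ[R] N} {φ : X →ₗ[A] Y}
    (hφ : ∀ m, φ (β m) = γ (f m)) (g : Y →ₗ[R] E) :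
    baseChangeHomEquiv hβ E (g ∘ₗ φ.restrictScalars R) =
      LinearMap.domHomPostcomp R A (LinearMap.lcomp R E f) (baseChangeHomEquiv hγ E g) := by
  ext a m
  simp [LinearMap.domHomPostcomp, hφ]

variable [Module.FinitePresentation A K] [Module.Injective R E]

/-- The isomorphism `K ⊗[A] Hom_R(A, Hom_R(M, E)) ≃ Hom_R(Hom_A(K, X), E)` for a finitely presented
`A`-module `K`, an injective `R`-module `E` and a base change `X` of `M` along `R → A`. -/
noncomputable def tensorHomDualEquiv :
    K ⊗[A] (A →ₗ[R] M →ₗ[R] E) ≃ₗ[A] ((K →ₗ[A] X) →ₗ[R] E) :=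
  (baseChangeHomEquiv hβ E).symm.lTensor K ≪≫ₗ
    LinearEquiv.ofBijective (tensorHomEval R A K X E) (tensorHomEval_bijective R A K X E)

@[simp]
theorem tensorHomDualEquiv_tmul (c : K) (g : X →ₗ[R] E) (h : K →ₗ[A] X) :
    tensorHomDualEquiv hβ K E (c ⊗ₜ baseChangeHomEquiv hβ E g) h = g (h c) := by
  simp [tensorHomDualEquiv]

theorem tensorHomDualEquiv_natural {f : M →ₗ[R] N} {φ : X →ₗ[A] Y}
    (hφ : ∀ m, φ (β m) = γ (f m)) (x : K ⊗[A] (A →ₗ[R] N →ₗ[R] E)) :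
    tensorHomDualEquiv hβ K E
        (LinearMap.lTensor K (LinearMap.domHomPostcomp R A (LinearMap.lcomp R E f)) x) =
      LinearMap.lcomp R E ((LinearMap.llcomp A K X Y φ).restrictScalars R)
        (tensorHomDualEquiv hγ K E x) := by
  induction x with
  | zero => simp
  | add x y hx hy => simp only [map_add, hx, hy]
  | tmul c w =>
    obtain ⟨g, rfl⟩ := (baseChangeHomEquiv hγ E).surjective w
    ext h
    simp [← baseChangeHomEquiv_comp hβ hγ E hφ]

end BaseChange

theorem tensor_hom_dual_natural_iso_general (S : Submonoid R)
    (K : Type u) [AddCommGroup K] [Module (Localization S) K]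
    [Module.FinitePresentation (Localization S) K]
    (E : Type u) [AddCommGroup E] [Module R E] [Module.Injective R E] :
    ∃ e : ∀ (M : Type u) [AddCommGroup M] [Module R M],
        (K ⊗[Localization S] (Localization S →ₗ[R] (M →ₗ[R] E))) ≃ₗ[Localization S]
          ((K →ₗ[Localization S] LocalizedModule S M) →ₗ[R] E),
      ∀ (M N : Type u) [AddCommGroup M] [Module R M] [AddCommGroup N] [Module R N]
        (f : M →ₗ[R] N) (x : K ⊗[Localization S] (Localization S →ₗ[R] (N →ₗ[R] E))),
        e M (LinearMap.lTensor K
              (LinearMap.domHomPostcomp R (Localization S) (LinearMap.lcomp R E f)) x)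
          = LinearMap.lcomp R E
              ((LinearMap.llcomp (Localization S) K (LocalizedModule S M) (LocalizedModule S N)
                  (LocalizedModule.map S f)).restrictScalars R)
              (e N x) :=
  ⟨fun M _ _ ↦ tensorHomDualEquiv (LocalizedModule.isBaseChange S M) K E,
    fun _ _ _ _ _ _ f x ↦ tensorHomDualEquiv_natural _ _ K E
      (fun m ↦ by simp) x⟩

/-- For a prime `𝔭` of a commutative Noetherian ring `R`, an injective
module `E` and a module `M`, there is an isomorphism, natural in `M`:
`k(𝔭) ⊗_{R_𝔭} Hom_R(R_𝔭, Hom_R(M, E)) ≅ Hom_R(Hom_{R_𝔭}(k(𝔭), M_𝔭), E)`. -/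
theorem tensor_hom_dual_natural_iso [IsNoetherianRing R]
    (𝔭 : Ideal R) [𝔭.IsPrime] (E : Type u) [AddCommGroup E] [Module R E]
    (hE : Module.Injective R E) :
    ∃ e : ∀ (M : Type u) [AddCommGroup M] [Module R M],
        (IsLocalRing.ResidueField (Localization.AtPrime 𝔭) ⊗[Localization.AtPrime 𝔭]
            (Localization.AtPrime 𝔭 →ₗ[R] (M →ₗ[R] E))) ≃ₗ[R]
          ((IsLocalRing.ResidueField (Localization.AtPrime 𝔭) →ₗ[Localization.AtPrime 𝔭]
            LocalizedModule 𝔭.primeCompl M) →ₗ[R] E),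
      ∀ (M N : Type u) [AddCommGroup M] [Module R M] [AddCommGroup N] [Module R N]
        (f : M →ₗ[R] N)
        (x : IsLocalRing.ResidueField (Localization.AtPrime 𝔭) ⊗[Localization.AtPrime 𝔭]
          (Localization.AtPrime 𝔭 →ₗ[R] (N →ₗ[R] E))),
        e M (LinearMap.lTensor (IsLocalRing.ResidueField (Localization.AtPrime 𝔭))
              (LinearMap.domHomPostcomp R (Localization.AtPrime 𝔭) (LinearMap.lcomp R E f)) x)
          = LinearMap.lcomp R E
              ((LinearMap.llcomp (Localization.AtPrime 𝔭)
                  (IsLocalRing.ResidueField (Localization.AtPrime 𝔭))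
                  (LocalizedModule 𝔭.primeCompl M) (LocalizedModule 𝔭.primeCompl N)
                  (LocalizedModule.map 𝔭.primeCompl f)).restrictScalars R)
              (e N x) := by
  have : Module.FinitePresentation (Localization.AtPrime 𝔭)
      (IsLocalRing.ResidueField (Localization.AtPrime 𝔭)) :=
    Module.finitePresentation_of_finite _ _
  obtain ⟨e, he⟩ := tensor_hom_dual_natural_iso_general R 𝔭.primeCompl
    (IsLocalRing.ResidueField (Localization.AtPrime 𝔭)) E
  exact ⟨fun M _ _ ↦ (e M).restrictScalars R, he⟩
end
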